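/- (Triviality, divergent form) Let p ∈ (1,∞), l ∈ (0,p), n ∈ [1,∞) real, R ∈ (0,∞]. Let φ : ℝ → ℝ be continuous and odd with τφ(τ) > 0 for a.e. τ. Let a be locally absolutely continuous on [0,R) with a > 0 a.e., let d_a(τ) := (n−1)a(τ)/τ + (1/p)a'(τ) satisfy d_a > 0 a.e. with d_a and d_a^{−1/(p−1)} locally integrable on [0,R). Let h : (0,R) × ℝ² → ℝ be a Carathéodory function such that for some θ ∈ (0,1] and a non-negative measurable q locally integrable on [0,R): h(τ,λ₀,λ₁)λ₁ ≤ θ q(τ)|λ₀|^l |λ₁|^{p−l} + (1−θ) d_a(τ)|λ₁|^p for all λ₀, λ₁ ∈ ℝ and a.e. τ. Assume K(0,r,q,d_a) < ∞ for every r ∈ (0,R). Let u be locally absolutely continuous on (0,R) with Φ_p(u') locally absolutely continuous on [0,R), u(0) = 0, and suppose u solves the divergent ODE: (a(τ)Φ_p(u'(τ)))' + (n−1)(a(τ)/τ)Φ_p(u'(τ)) − h(τ,u(τ),u'(τ)) + φ(u(τ)) = 0 for a.e. τ ∈ (0,R). If a(0) = 0 or u'(0) = 0, then u ≡ 0 on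 [0,R). -/

import Mathlib

open MeasureTheory Set Filter
open scoped ENNReal

/-- `Φ_p(λ) = |λ|^{p-2} λ` for `λ ≠ 0`, and `Φ_p(0) = 0`. -/
noncomputable def PhiP (p x : ℝ) : ℝ := if x = 0 then 0 else |x| ^ (p - 2) * x

/-- `u` is absolutely continuous on `[s,t]` with a.e. derivative `u'`:
`u'` is integrable on `[s,t]` and the fundamental theorem of calculus holds. -/
def ACOn (u u' : ℝ → ℝ) (s t : ℝ) : Prop :=
  MeasureTheory.IntegrableOn u' (Set.Icc s t) ∧
    ∀ x ∈ Set.Icc s t, u x = u s + ∫ σ in s..x, u' σ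

/-- The Beesack–Das constant
`K(s,·,q,v) = ((p-l)/p)^{(p-l)/p} [∫_S q(t)^{p/l} v(t)^{-(p-l)/l}
  (∫_s^t v(σ)^{-1/(p-1)} dσ)^{p-1} dt]^{l/p}`, over a set `S`. -/
noncomputable def BDK (p l : ℝ) (q v : ℝ → ℝ) (s : ℝ) (S : Set ℝ) : ℝ≥0∞ :=
  ENNReal.ofReal (((p - l) / p) ^ ((p - l) / p)) *
    (∫⁻ t in S,
      ENNReal.ofReal (q t) ^ (p / l) * ENNReal.ofReal (v t) ^ (-((p - l) / l)) *
        (∫⁻ σ in Set.Ioc s t, ENNReal.ofReal (v σ) ^ (-(1 / (p - 1)))) ^ (p - 1)) ^ (l / p)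

/-- `δ_a(τ) = (n-1) a(τ)/τ - (1 - 1/p) a'(τ)`. -/
noncomputable def deltaA (n p : ℝ) (a a' : ℝ → ℝ) : ℝ → ℝ :=
  fun τ => (n - 1) * a τ / τ - (1 - 1 / p) * a' τ

/-- `d_a(τ) = (n-1) a(τ)/τ + (1/p) a'(τ)`. -/
noncomputable def dA (n p : ℝ) (a a' : ℝ → ℝ) : ℝ → ℝ :=
  fun τ => (n - 1) * a τ / τ + (1 / p) * a' τ

lemma ACOn.abs {f f' : ℝ → ℝ} {r : ℝ} (hr : 0 < r) (hf : ACOn f f' 0 r) :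
    AbsolutelyContinuousOnInterval f 0 r ∧ ∀ᵐ x, x ∈ Ioo 0 r → HasDerivAt f (f' x) x := by
  obtain ⟨h1, h2⟩ := hf
  have hi : IntervalIntegrable f' volume 0 r := by
    rw [intervalIntegrable_iff_integrableOn_Icc_of_le hr.le]; exact h1
  constructor
  · have hac := hi.absolutelyContinuousOnInterval_intervalIntegral (c := 0) (by simp)
    rw [absolutelyContinuousOnInterval_iff] at hac ⊢
    intro ε hε
    obtain ⟨δ, hδ, H⟩ := hac ε hε
    refine ⟨δ, hδ, fun E hE hl => ?_⟩
    have := H E hE hl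
    convert this using 1
    refine Finset.sum_congr rfl fun i hi => ?_
    have hE' := hE.1 i hi
    rw [uIcc_of_le hr.le] at hE'
    rw [h2 _ hE'.1, h2 _ hE'.2, dist_add_left]
  · filter_upwards [hi.ae_hasDerivAt_integral] with x hx hxr
    have h3 := hx (by rw [uIcc_of_le hr.le]; exact Ioo_subset_Icc_self hxr) 0 (by simp)
    refine (h3.const_add (f 0)).congr_of_eventuallyEq ?_
    filter_upwards [Ioo_mem_nhds hxr.1 hxr.2] with y hy
    exact h2 y (Ioo_subset_Icc_self hy)

lemma ac_comp {f g : ℝ → ℝ} {a b : ℝ} (hf : AbsolutelyContinuousOnInterval f a b)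
    (hg : ContDiff ℝ 1 g) : AbsolutelyContinuousOnInterval (fun x => g (f x)) a b := by
  obtain ⟨C, hC⟩ := hf.exists_bound
  have hd : Continuous (deriv g) := hg.continuous_deriv le_rfl
  obtain ⟨D, hD⟩ := (isCompact_Icc (a := -C) (b := C)).exists_bound_of_continuousOn hd.continuousOn
  have hlip : ∀ x ∈ Icc (-C) C, ∀ y ∈ Icc (-C) C, ‖g y - g x‖ ≤ D * ‖y - x‖ := by
    intro x hx y hy
    exact (convex_Icc (-C) C).norm_image_sub_le_of_norm_deriv_le
      (fun z _ => (hg.differentiable (by norm_num)).differentiableAt) hD hx hy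
  rw [absolutelyContinuousOnInterval_iff] at hf ⊢
  intro ε hε
  obtain ⟨δ, hδ, H⟩ := hf (ε / (|D| + 1)) (by positivity)
  refine ⟨δ, hδ, fun E hE hl => ?_⟩
  have h1 := H E hE hl
  have h2 : ∑ i ∈ Finset.range E.1, dist (g (f (E.2 i).1)) (g (f (E.2 i).2)) ≤
      (|D| + 1) * ∑ i ∈ Finset.range E.1, dist (f (E.2 i).1) (f (E.2 i).2) := by
    rw [Finset.mul_sum]
    refine Finset.sum_le_sum fun i hi => ?_
    have hE' := hE.1 i hi
    have a1 := hC _ hE'.1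
    have a2 := hC _ hE'.2
    rw [Real.norm_eq_abs, abs_le] at a1 a2
    have := hlip _ a2 _ a1
    rw [dist_eq_norm, dist_eq_norm]
    refine this.trans ?_
    gcongr
    linarith [le_abs_self D]
  refine h2.trans_lt ?_
  rwa [lt_div_iff₀' (by positivity)] at h1

/-- exponent arithmetic for `PhiP` -/
lemma abs_PhiP_rpow {p : ℝ} (hp : 1 < p) (x : ℝ) :
    |PhiP p x| ^ (p / (p - 1)) = |x| ^ p := by
  have h1 : p - 1 ≠ 0 := by linarith
  unfold PhiP
  split_ifs with hx
  · rw [hx, abs_zero, Real.zero_rpow (div_ne_zero (by linarith) h1), Real.zero_rpow (by linarith)]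
  · have hx' : 0 < |x| := abs_pos.mpr hx
    rw [abs_mul, abs_of_nonneg (by positivity : 0 ≤ |x| ^ (p - 2))]
    rw [← Real.rpow_add_one hx'.ne', ← Real.rpow_mul hx'.le]
    congr 1
    field_simp
    ring

lemma PhiP_mul_self {p : ℝ} (hp : 1 < p) (x : ℝ) : PhiP p x * x = |x| ^ p := by
  unfold PhiP
  split_ifs with hx
  · rw [hx, abs_zero, Real.zero_rpow (by linarith)]; simp
  · have hx' : 0 < |x| := abs_pos.mpr hx
    rw [mul_assoc, ← abs_mul_abs_self, ← mul_assoc, ← Real.rpow_add_one hx'.ne',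
      ← Real.rpow_add_one hx'.ne']
    congr 1
    ring

lemma PhiP_inv {p : ℝ} (hp : 1 < p) (x : ℝ) :
    |PhiP p x| ^ (p / (p - 1) - 2) * PhiP p x = x := by
  have h1 : p - 1 ≠ 0 := by linarith
  unfold PhiP
  split_ifs with hx
  · simp [hx]
  · have hx' : 0 < |x| := abs_pos.mpr hx
    rw [abs_mul, abs_of_nonneg (by positivity : 0 ≤ |x| ^ (p - 2))]
    rw [← Real.rpow_add_one hx'.ne', ← Real.rpow_mul hx'.le, ← mul_assoc, ← Real.rpow_add hx']
    have : (p - 2 + 1) * (p / (p - 1) - 2) + (p - 2) = 0 := by field_simp; ring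
    rw [this]; simp

lemma conj_gt {p : ℝ} (hp : 1 < p) : 1 < p / (p - 1) := by
  rw [lt_div_iff₀ (by linarith)]; linarith

lemma cont_inv {p : ℝ} (hp : 1 < p) :
    Continuous fun y : ℝ => |y| ^ (p / (p - 1) - 2) * y := by
  have h := (contDiff_norm_rpow (E := ℝ) (conj_gt hp)).continuous_deriv le_rfl
  have h2 : (deriv fun x : ℝ => ‖x‖ ^ (p / (p - 1))) =
      fun y => (p / (p - 1)) * (|y| ^ (p / (p - 1) - 2) * y) := by
    ext y
    rw [(hasDerivAt_norm_rpow y (conj_gt hp)).deriv]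
    simp [mul_assoc]
  rw [h2] at h
  have h3 : p / (p - 1) ≠ 0 := by linarith [conj_gt hp]
  have := h.const_smul (p / (p - 1))⁻¹
  convert this using 1
  ext y
  rw [Pi.smul_apply, smul_eq_mul, inv_mul_cancel_left₀ h3]

lemma F_pos_of_pos {φ : ℝ → ℝ} (hφ : Continuous φ)
    (hs : ∀ᵐ τ ∂(volume : Measure ℝ), 0 < τ * φ τ) {x : ℝ} (hx : 0 < x) :
    0 < ∫ t in (0 : ℝ)..x, φ t := by
  rw [intervalIntegral.integral_pos_iff_support_of_nonneg_ae' _ (hφ.intervalIntegrable _ _)]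
  · refine ⟨hx, ?_⟩
    have : volume (Ioc 0 x) ≤ volume (Function.support φ ∩ Ioc 0 x) := by
      apply measure_mono_ae
      filter_upwards [hs] with t ht htx
      exact ⟨fun h0 => by rw [h0] at ht; simp at ht, htx⟩
    refine lt_of_lt_of_le ?_ this
    simpa using hx
  · rw [uIoc_of_le hx.le]
    filter_upwards [ae_restrict_of_ae hs, ae_restrict_mem measurableSet_Ioc] with t ht htx
    exact (pos_of_mul_pos_right ht htx.1.le).le

lemma F_pos {φ : ℝ → ℝ} (hφ : Continuous φ) (hodd : ∀ t : ℝ, φ (-t) = -φ t)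
    (hs : ∀ᵐ τ ∂(volume : Measure ℝ), 0 < τ * φ τ) {x : ℝ} (hx : x ≠ 0) :
    0 < ∫ t in (0 : ℝ)..x, φ t := by
  rcases lt_or_gt_of_ne hx with h | h
  · have h1 := F_pos_of_pos hφ hs (neg_pos.mpr h)
    have h2 : ∫ t in (0 : ℝ)..(-x), φ t = ∫ t in (0 : ℝ)..x, φ t := by
      have := intervalIntegral.integral_comp_neg (a := 0) (b := -x) (fun t => φ t)
      simp only [hodd, intervalIntegral.integral_neg, neg_neg, neg_zero] at this
      rw [intervalIntegral.integral_symm 0 x]  at this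
      linarith
    linarith
  · exact F_pos_of_pos hφ hs h

lemma a_nonneg {a : ℝ → ℝ} {r : ℝ} (hr : 0 < r) (hc : ContinuousOn a (Icc 0 r))
    (hpos : ∀ᵐ τ ∂(volume.restrict (Ioc 0 r)), 0 < a τ) : 0 ≤ a r := by
  by_contra hneg
  push Not at hneg
  have h1 : ∀ᶠ x in nhdsWithin r (Icc 0 r), a x < 0 :=
    (hc r ⟨hr.le, le_rfl⟩).eventually (gt_mem_nhds hneg)
  rw [eventually_nhdsWithin_iff, Metric.eventually_nhds_iff] at h1
  obtain ⟨ε, hε, H⟩ := h1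
  have hsub : Ioo (max 0 (r - ε)) r ⊆ Ioc 0 r := fun x hx =>
    ⟨(le_max_left _ _).trans_lt hx.1, hx.2.le⟩
  have h2 : ∀ᵐ τ ∂(volume.restrict (Ioo (max 0 (r - ε)) r)), False := by
    filter_upwards [ae_restrict_of_ae_restrict_of_subset hsub hpos,
      ae_restrict_mem measurableSet_Ioo] with x h3 h4
    have h5 : r - ε < x := (le_max_right _ _).trans_lt h4.1
    have := H (y := x) (by rw [Real.dist_eq, abs_lt]; constructor <;> linarith [h4.2])
      ⟨(hsub h4).1.le, h4.2.le⟩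
    linarith
  rw [eventually_false_iff_eq_bot, ae_eq_bot, Measure.restrict_eq_zero] at h2
  simp at h2
  rcases h2 with h2 | h2 <;> linarith

lemma u'_cont {p : ℝ} (hp : 1 < p) {u' : ℝ → ℝ} {s : Set ℝ}
    (h : ContinuousOn (fun τ => PhiP p (u' τ)) s) : ContinuousOn u' s := by
  have := (cont_inv hp).comp_continuousOn h
  refine this.congr fun x _ => ?_
  exact (PhiP_inv hp (u' x)).symm

lemma energy {p l n θ r : ℝ} (hp : 1 < p) (hl0 : 0 < l) (hlp : l < p) (hr : 0 < r)
    {φ : ℝ → ℝ} (hφcont : Continuous φ)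
    {a a' q u u' v' w' : ℝ → ℝ} {h : ℝ → ℝ → ℝ → ℝ}
    (haAC : ACOn a a' 0 r) (har : 0 ≤ a r)
    (hvint : IntegrableOn (dA n p a a') (Set.Ioc 0 r))
    (hqint : IntegrableOn q (Set.Ioc 0 r))
    (hgrowth : ∀ᵐ τ ∂(volume.restrict (Ioc 0 r)),
      ∀ lam₀ lam₁ : ℝ, h τ lam₀ lam₁ * lam₁ ≤
        θ * q τ * |lam₀| ^ l * |lam₁| ^ (p - l) + (1 - θ) * dA n p a a' τ * |lam₁| ^ p)
    (huAC : ACOn u u' 0 r)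
    (hvAC : ACOn (fun τ => PhiP p (u' τ)) v' 0 r)
    (hwAC : ACOn (fun τ => a τ * PhiP p (u' τ)) w' 0 r)
    (hu0 : u 0 = 0)
    (hODE : ∀ᵐ τ ∂(volume.restrict (Ioc 0 r)),
      w' τ + (n - 1) * (a τ / τ) * PhiP p (u' τ)
        - h τ (u τ) (u' τ) + φ (u τ) = 0)
    (hdeg : a 0 = 0 ∨ u' 0 = 0) :
    IntegrableOn (fun τ => q τ * (|u τ| ^ l * |u' τ| ^ (p - l))) (Ioc 0 r) ∧
    IntegrableOn (fun τ => dA n p a a' τ * |u' τ| ^ p) (Ioc 0 r) ∧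
    ∫ t in (0 : ℝ)..(u r), φ t ≤ θ * ((∫ τ in Ioc 0 r, q τ * (|u τ| ^ l * |u' τ| ^ (p - l))) -
      ∫ τ in Ioc 0 r, dA n p a a' τ * |u' τ| ^ p) := by
  obtain ⟨aA, aD⟩ := haAC.abs hr
  obtain ⟨uA, uD⟩ := huAC.abs hr
  obtain ⟨vA, vD⟩ := hvAC.abs hr
  obtain ⟨wA, wD⟩ := hwAC.abs hr
  have uc : ContinuousOn u (Icc 0 r) := by
    have := uA.continuousOn; rwa [uIcc_of_le hr.le] at this
  have u'c : ContinuousOn u' (Icc 0 r) := by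
    have := vA.continuousOn; rw [uIcc_of_le hr.le] at this
    exact u'_cont hp this
  have mulint : ∀ f g : ℝ → ℝ, IntegrableOn f (Ioc 0 r) → ContinuousOn g (Icc 0 r) →
      IntegrableOn (fun τ => f τ * g τ) (Ioc 0 r) := by
    intro f g hf hg
    rw [← integrableOn_Icc_iff_integrableOn_Ioc] at hf ⊢
    exact hf.mul_continuousOn hg isCompact_Icc
  have hQ : IntegrableOn (fun τ => q τ * (|u τ| ^ l * |u' τ| ^ (p - l))) (Ioc 0 r) := by
    apply mulint _ _ hqint
    refine (uc.abs.rpow_const fun x _ => Or.inr hl0.le).mul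
      (u'c.abs.rpow_const fun x _ => Or.inr (by linarith))
  have hE : IntegrableOn (fun τ => dA n p a a' τ * |u' τ| ^ p) (Ioc 0 r) := by
    apply mulint _ _ hvint
    exact (u'c.abs.rpow_const fun x _ => Or.inr (by linarith))
  refine ⟨hQ, hE, ?_⟩
  set F : ℝ → ℝ := fun x => ∫ t in (0 : ℝ)..x, φ t with hF
  have hFd : ∀ x, HasDerivAt F (φ x) x := fun x =>
    (hφcont.integral_hasStrictDerivAt 0 x).hasDerivAt
  have hFc : ContDiff ℝ 1 F := by
    rw [contDiff_one_iff_deriv]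
    refine ⟨fun x => (hFd x).differentiableAt, ?_⟩
    rw [show deriv F = φ from funext fun x => (hFd x).deriv]
    exact hφcont
  set M : ℝ → ℝ := fun y => |y| ^ (p / (p - 1)) with hM
  have hMc : ContDiff ℝ 1 M := by
    have := contDiff_norm_rpow (E := ℝ) (conj_gt hp)
    simpa only [Real.norm_eq_abs] using this
  set G : ℝ → ℝ := fun τ => (p - 1) / p * (a τ * M (PhiP p (u' τ))) + F (u τ) with hG
  have GA : AbsolutelyContinuousOnInterval G 0 r :=
    ((aA.mul (ac_comp vA hMc)).const_mul ((p - 1) / p)).add (ac_comp uA hFc)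
  have GI := GA.integral_deriv_eq_sub
  have Gint := GA.intervalIntegrable_deriv
  rw [intervalIntegrable_iff_integrableOn_Ioc_of_le hr.le] at Gint
  rw [intervalIntegral.integral_of_le hr.le] at GI
  have hG0 : G 0 = 0 := by
    simp only [hG, hF, hM, hu0, intervalIntegral.integral_same, abs_PhiP_rpow hp]
    rcases hdeg with h0 | h0
    · simp [h0]
    · simp [h0, Real.zero_rpow (by linarith : p ≠ 0)]
  have hGr : F (u r) ≤ G r := by
    have : 0 ≤ (p - 1) / p * (a r * M (PhiP p (u' r))) := by
      have : 0 ≤ (p - 1) / p := div_nonneg (by linarith) (by linarith)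
      positivity
    simp only [hG]; linarith
  have hle : deriv G ≤ᵐ[volume.restrict (Ioc 0 r)]
      fun τ => θ * (q τ * (|u τ| ^ l * |u' τ| ^ (p - l)) - dA n p a a' τ * |u' τ| ^ p) := by
    have hne : ∀ᵐ x : ℝ, x ≠ r := by simp [ae_iff, measure_singleton]
    filter_upwards [ae_restrict_of_ae aD, ae_restrict_of_ae uD, ae_restrict_of_ae vD,
      ae_restrict_of_ae wD, ae_restrict_of_ae hne, ae_restrict_mem measurableSet_Ioc, hODE,
      hgrowth] with x aD uD vD wD hne hx hODE hgr
    have hx' : x ∈ Ioo 0 r := ⟨hx.1, lt_of_le_of_ne hx.2 hne⟩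
    replace aD := aD hx'
    replace uD := uD hx'
    replace vD := vD hx'
    replace wD := wD hx'
    have hw : w' x = a' x * PhiP p (u' x) + a x * v' x := wD.unique (aD.mul vD)
    have hMd := (hasDerivAt_abs_rpow (PhiP p (u' x)) (conj_gt hp))
    have hMd' := HasDerivAt.comp x hMd vD
    have hGd := ((aD.mul hMd').const_mul ((p - 1) / p)).add (HasDerivAt.comp x (hFd (u x)) uD)
    have e1 : deriv G x = _ := hGd.deriv
    rw [e1]
    have hg := hgr (u x) (u' x)
    have e2 := PhiP_mul_self hp (u' x)
    have e3 := PhiP_inv hp (u' x)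
    have e4 := abs_PhiP_rpow hp (u' x)
    simp only [Function.comp]
    rw [mul_assoc (p / (p - 1)), e3, e4]
    have e5 : (p - 1) / p * (a' x * |u' x| ^ p + a x * (p / (p - 1) * u' x * v' x)) + φ (u x) * u' x
       = h x (u x) (u' x) * u' x - dA n p a a' x * |u' x| ^ p := by
      have h6 : h x (u x) (u' x) = w' x + (n - 1) * (a x / x) * PhiP p (u' x) + φ (u x) := by
        linarith
      have h1 : p - 1 ≠ 0 := by linarith
      have h2 : p ≠ 0 := by linarith
      have h3 : x ≠ 0 := hx.1.ne'
      rw [h6, hw, ← e2]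
      unfold dA
      field_simp
      ring
    rw [e5]
    nlinarith [hg]
  have := integral_mono_ae Gint ((hQ.sub hE).const_mul θ) hle
  rw [GI, hG0, integral_const_mul] at this
  have h9 := integral_sub hQ hE
  simp only [Pi.sub_apply] at this
  rw [h9] at this
  linarith

lemma hardy1 {μ : Measure ℝ} {p : ℝ} (hp : 1 < p) {m U : ℝ → ℝ≥0∞} (hm : AEMeasurable m μ)
    (hU : AEMeasurable U μ) (hm0 : ∀ᵐ t ∂μ, m t ≠ 0 ∧ m t ≠ ⊤) :
    ∫⁻ t, U t ∂μ ≤ (∫⁻ t, m t ^ (-(1 / (p - 1))) ∂μ) ^ ((p - 1) / p) *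
      (∫⁻ t, m t * U t ^ p ∂μ) ^ (1 / p) := by
  have h1 : p - 1 ≠ 0 := by linarith
  have h2 : p ≠ 0 := by linarith
  have hc : (p / (p - 1)).HolderConjugate p :=
    (Real.HolderConjugate.conjExponent hp).symm
  have H := ENNReal.lintegral_mul_le_Lp_mul_Lq μ hc (f := fun t => m t ^ (-(1 / p)))
    (g := fun t => m t ^ (1 / p) * U t) (hm.pow_const _) ((hm.pow_const _).mul hU)
  have e1 : ∫⁻ t, U t ∂μ =
      ∫⁻ t, ((fun t => m t ^ (-(1 / p))) * (fun t => m t ^ (1 / p) * U t)) t ∂μ := by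
    apply lintegral_congr_ae
    filter_upwards [hm0] with t ht
    simp only [Pi.mul_apply]
    rw [← mul_assoc, ← ENNReal.rpow_add _ _ ht.1 ht.2]
    simp
  rw [e1]
  refine H.trans_eq ?_
  congr 2
  · apply lintegral_congr
    intro t
    rw [← ENNReal.rpow_mul]
    congr 1
    field_simp
  · field_simp
  · apply lintegral_congr
    intro t
    rw [ENNReal.mul_rpow_of_nonneg _ _ (by linarith), ← ENNReal.rpow_mul]
    rw [one_div_mul_cancel h2, ENNReal.rpow_one]

lemma hardy2 {μ : Measure ℝ} {p l : ℝ} (hl0 : 0 < l) (hlp : l < p)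
    {Q W m U : ℝ → ℝ≥0∞} (hQ : AEMeasurable Q μ) (hW : AEMeasurable W μ) (hm : AEMeasurable m μ)
    (hU : AEMeasurable U μ) (hm0 : ∀ᵐ t ∂μ, m t ≠ 0 ∧ m t ≠ ⊤) :
    ∫⁻ t, Q t * W t ^ ((p - 1) * l / p) * U t ^ (p - l) ∂μ ≤
      (∫⁻ t, Q t ^ (p / l) * m t ^ (-((p - l) / l)) * W t ^ (p - 1) ∂μ) ^ (l / p) *
      (∫⁻ t, m t * U t ^ p ∂μ) ^ ((p - l) / p) := by
  have h1 : p - l ≠ 0 := by linarith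
  have h2 : p ≠ 0 := by linarith
  have h3 : l ≠ 0 := by linarith
  have hp0 : 0 < p := by linarith
  have hpl : 0 < p - l := by linarith
  have hc : (p / l).HolderConjugate (p / (p - l)) := by
    rw [Real.holderConjugate_iff]
    refine ⟨by rwa [lt_div_iff₀ hl0, one_mul], ?_⟩
    rw [inv_div, inv_div]
    field_simp
    ring
  have H := ENNReal.lintegral_mul_le_Lp_mul_Lq μ hc
    (f := fun t => Q t * m t ^ (-((p - l) / p)) * W t ^ ((p - 1) * l / p))
    (g := fun t => m t ^ ((p - l) / p) * U t ^ (p - l))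
    ((hQ.mul (hm.pow_const _)).mul (hW.pow_const _)) ((hm.pow_const _).mul (hU.pow_const _))
  have e1 : ∫⁻ t, Q t * W t ^ ((p - 1) * l / p) * U t ^ (p - l) ∂μ =
      ∫⁻ t, ((fun t => Q t * m t ^ (-((p - l) / p)) * W t ^ ((p - 1) * l / p)) *
        (fun t => m t ^ ((p - l) / p) * U t ^ (p - l))) t ∂μ := by
    apply lintegral_congr_ae
    filter_upwards [hm0] with t ht
    simp only [Pi.mul_apply]
    have : m t ^ (-((p - l) / p)) * m t ^ ((p - l) / p) = 1 := by
      rw [← ENNReal.rpow_add _ _ ht.1 ht.2]; simp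
    calc _ = (m t ^ (-((p - l) / p)) * m t ^ ((p - l) / p)) *
          (Q t * W t ^ ((p - 1) * l / p) * U t ^ (p - l)) := by rw [this, one_mul]
      _ = _ := by ring
  rw [e1]
  refine H.trans_eq ?_
  congr 2
  · apply lintegral_congr
    intro t
    have hpl' : 0 ≤ p / l := by positivity
    rw [ENNReal.mul_rpow_of_nonneg _ _ hpl', ENNReal.mul_rpow_of_nonneg _ _ hpl',
      ← ENNReal.rpow_mul, ← ENNReal.rpow_mul]
    congr 2
    · congr 1; field_simp
    · field_simp
  · field_simp
  · apply lintegral_congr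
    intro t
    have hpl' : 0 ≤ p / (p - l) := by positivity
    rw [ENNReal.mul_rpow_of_nonneg _ _ hpl', ← ENNReal.rpow_mul, ← ENNReal.rpow_mul]
    congr 2
    · rw [show (p - l) / p * (p / (p - l)) = 1 by field_simp, ENNReal.rpow_one]
    · field_simp
  · field_simp

lemma hardy {p l r s : ℝ} (hp : 1 < p) (hl0 : 0 < l) (hlp : l < p) (hs : 0 ≤ s)
    (hsr : s ≤ r) (hr : 0 < r)
    {q v u u' : ℝ → ℝ} (hq : Measurable q) (hv : IntegrableOn v (Ioc 0 r))
    (hv0 : ∀ᵐ τ ∂(volume.restrict (Ioc 0 r)), 0 < v τ)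
    (hq0 : ∀ᵐ τ ∂(volume.restrict (Ioc 0 r)), 0 ≤ q τ)
    (huAC : ACOn u u' 0 r) (hu0 : u 0 = 0)
    (hus : ∀ x ∈ Ico 0 s, u x = 0)
    (hB : ∫⁻ t in Ioc s r,
      ENNReal.ofReal (q t) ^ (p / l) * ENNReal.ofReal (v t) ^ (-((p - l) / l)) *
        (∫⁻ σ in Set.Ioc 0 t, ENNReal.ofReal (v σ) ^ (-(1 / (p - 1)))) ^ (p - 1) ≤ 1)
    (hQ : IntegrableOn (fun τ => q τ * (|u τ| ^ l * |u' τ| ^ (p - l))) (Ioc 0 r))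
    (hE : IntegrableOn (fun τ => v τ * |u' τ| ^ p) (Ioc 0 r)) :
    ∫ τ in Ioc 0 r, q τ * (|u τ| ^ l * |u' τ| ^ (p - l)) ≤
      ∫ τ in Ioc 0 r, v τ * |u' τ| ^ p := by
  have hp0 : 0 < p := by linarith
  have hpl0 : 0 ≤ (p - l) / p := div_nonneg (by linarith) hp0.le
  set m : ℝ → ℝ≥0∞ := fun t => ENNReal.ofReal (v t) with hm
  set U : ℝ → ℝ≥0∞ := fun t => ENNReal.ofReal |u' t| with hU
  set W : ℝ → ℝ≥0∞ := fun t => ∫⁻ σ in Set.Ioc 0 t, m σ ^ (-(1 / (p - 1))) with hW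
  set E : ℝ≥0∞ := ∫⁻ t in Ioc 0 r, m t * U t ^ p with hEdef
  have hu'i : IntegrableOn u' (Ioc 0 r) := huAC.1.mono_set Ioc_subset_Icc_self
  have mm : AEMeasurable m (volume.restrict (Ioc 0 r)) :=
    hv.aestronglyMeasurable.aemeasurable.ennreal_ofReal
  have Um : AEMeasurable U (volume.restrict (Ioc 0 r)) :=
    hu'i.abs.aestronglyMeasurable.aemeasurable.ennreal_ofReal
  have hm0 : ∀ᵐ t ∂(volume.restrict (Ioc 0 r)), m t ≠ 0 ∧ m t ≠ ⊤ := by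
    filter_upwards [hv0] with t ht
    exact ⟨by simpa [hm] using ht, ENNReal.ofReal_ne_top⟩
  have Wm : Measurable W := by
    apply Monotone.measurable
    intro x y hxy
    exact lintegral_mono_set (Ioc_subset_Ioc_right hxy)
  -- pointwise bound
  have hub : ∀ t ∈ Ioc 0 r, ENNReal.ofReal |u t| ≤ W t ^ ((p - 1) / p) * E ^ (1 / p) := by
    intro t ht
    have hsub : Ioc 0 t ⊆ Ioc 0 r := Ioc_subset_Ioc_right ht.2
    have e := huAC.2 t ⟨ht.1.le, ht.2⟩
    rw [hu0, zero_add, intervalIntegral.integral_of_le ht.1.le] at e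
    have h1 : ENNReal.ofReal |u t| ≤ ∫⁻ σ in Ioc 0 t, U σ := by
      rw [e, ← Real.norm_eq_abs, ofReal_norm]
      refine (enorm_integral_le_lintegral_enorm _).trans_eq ?_
      apply lintegral_congr
      intro σ
      rw [← ofReal_norm, Real.norm_eq_abs]
    refine h1.trans ?_
    refine (hardy1 hp (mm.mono_set hsub) (Um.mono_set hsub)
      (ae_restrict_of_ae_restrict_of_subset hsub hm0)).trans ?_
    gcongr
    exact lintegral_mono_set hsub
  have hsub : Ioc s r ⊆ Ioc 0 r := Ioc_subset_Ioc_left hs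
  have key : ∫⁻ t in Ioc 0 r, ENNReal.ofReal (q t * (|u t| ^ l * |u' t| ^ (p - l))) ≤ E := by
    have h0 : ∫⁻ t in Ioc 0 r, ENNReal.ofReal (q t * (|u t| ^ l * |u' t| ^ (p - l))) =
        ∫⁻ t in Ioc s r, ENNReal.ofReal (q t * (|u t| ^ l * |u' t| ^ (p - l))) := by
      rw [← Ioc_union_Ioc_eq_Ioc hs hsr, lintegral_union measurableSet_Ioc
        (by rw [Set.disjoint_left]; intro x h1 h2; exact absurd h1.2 (not_le.mpr h2.1))]
      have : ∫⁻ t in Ioc 0 s, ENNReal.ofReal (q t * (|u t| ^ l * |u' t| ^ (p - l))) = 0 := by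
        rw [setLIntegral_congr Ioo_ae_eq_Ioc.symm]
        rw [setLIntegral_congr_fun (g := fun _ => 0) measurableSet_Ioo]
        · simp
        · intro x hx
          simp only
          rw [hus x ⟨hx.1.le, hx.2⟩, abs_zero, Real.zero_rpow hl0.ne']
          simp
      rw [this, zero_add]
    rw [h0]
    have h1 : ∫⁻ t in Ioc s r, ENNReal.ofReal (q t * (|u t| ^ l * |u' t| ^ (p - l))) ≤
        ∫⁻ t in Ioc s r, E ^ (l / p) *
          (ENNReal.ofReal (q t) * W t ^ ((p - 1) * l / p) * U t ^ (p - l)) := by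
      apply setLIntegral_mono' measurableSet_Ioc
      intro t ht
      rw [ENNReal.ofReal_mul' (by positivity), ENNReal.ofReal_mul (by positivity),
        ← ENNReal.ofReal_rpow_of_nonneg (abs_nonneg _) hl0.le,
        ← ENNReal.ofReal_rpow_of_nonneg (abs_nonneg _) (by linarith)]
      have := ENNReal.rpow_le_rpow (hub t (hsub ht)) hl0.le
      rw [ENNReal.mul_rpow_of_nonneg _ _ hl0.le, ← ENNReal.rpow_mul, ← ENNReal.rpow_mul] at this
      rw [show (p - 1) / p * l = (p - 1) * l / p by ring, show 1 / p * l = l / p by ring] at this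
      calc _ ≤ ENNReal.ofReal (q t) * (W t ^ ((p - 1) * l / p) * E ^ (l / p) * U t ^ (p - l)) := by
            gcongr
        _ = _ := by ring
    refine h1.trans ?_
    have hEtop : E ^ (l / p) ≠ ⊤ := by
      apply ENNReal.rpow_ne_top_of_nonneg (by positivity)
      have := hE.lintegral_lt_top
      refine ne_of_lt (lt_of_le_of_lt ?_ this)
      apply lintegral_mono
      intro t
      simp only [hm, hU]
      rw [ENNReal.ofReal_mul' (by positivity),
        ← ENNReal.ofReal_rpow_of_nonneg (abs_nonneg _) hp0.le]
    rw [lintegral_const_mul' _ _ hEtop]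
    have h2 := hardy2 (μ := volume.restrict (Ioc s r)) hl0 hlp
      (Q := fun t => ENNReal.ofReal (q t)) (W := W) (m := m) (U := U)
      hq.ennreal_ofReal.aemeasurable Wm.aemeasurable (mm.mono_set hsub) (Um.mono_set hsub)
      (ae_restrict_of_ae_restrict_of_subset hsub hm0)
    calc _ ≤ E ^ (l / p) * (1 ^ (l / p) * E ^ ((p - l) / p)) := by
          refine mul_le_mul_right (h2.trans ?_) _
          gcongr
          · exact lintegral_mono_set hsub
      _ = E := by
          rw [ENNReal.one_rpow, one_mul, ← ENNReal.rpow_add_of_nonneg _ _ (by positivity)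
            (div_nonneg (by linarith) hp0.le)]
          rw [show l / p + (p - l) / p = 1 by field_simp; ring, ENNReal.rpow_one]
  have hE' : E = ∫⁻ t in Ioc 0 r, ENNReal.ofReal (v t * |u' t| ^ p) := by
    apply lintegral_congr
    intro t
    rw [ENNReal.ofReal_mul' (by positivity),
        ← ENNReal.ofReal_rpow_of_nonneg (abs_nonneg _) hp0.le]
  rw [hE', ← ofReal_integral_eq_lintegral_ofReal hE, ← ofReal_integral_eq_lintegral_ofReal hQ]
    at key
  · rwa [ENNReal.ofReal_le_ofReal_iff] at key
    apply integral_nonneg_of_ae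
    filter_upwards [hv0] with t ht
    simp only [Pi.zero_apply]; positivity
  · filter_upwards [hq0] with t ht
    simp only [Pi.zero_apply]; positivity
  · filter_upwards [hv0] with t ht
    simp only [Pi.zero_apply]; positivity

/-- **Triviality (divergent form)**, Theorem 2 ii) of the paper. -/
theorem triviality_divergent
    (p l n : ℝ) (R : ℝ≥0∞)
    (hp : 1 < p) (hl0 : 0 < l) (hlp : l < p) (hn : 1 ≤ n) (hR : 0 < R)
    (φ : ℝ → ℝ) (hφcont : Continuous φ) (hφodd : ∀ t : ℝ, φ (-t) = -φ t)
    (hφsign : ∀ᵐ τ ∂(volume : Measure ℝ), 0 < τ * φ τ)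
    (a a' : ℝ → ℝ)
    (haAC : ∀ r : ℝ, 0 < r → ENNReal.ofReal r < R → ACOn a a' 0 r)
    (q : ℝ → ℝ) (hqmeas : Measurable q)
    (hapos : ∀ᵐ τ ∂(volume.restrict {τ : ℝ | 0 < τ ∧ ENNReal.ofReal τ < R}), 0 < a τ)
    (hvpos : ∀ᵐ τ ∂(volume.restrict {τ : ℝ | 0 < τ ∧ ENNReal.ofReal τ < R}), 0 < dA n p a a' τ)
    (hvint : ∀ r : ℝ, 0 < r → ENNReal.ofReal r < R →
      IntegrableOn (dA n p a a') (Set.Ioc 0 r) ∧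
        IntegrableOn (fun τ => dA n p a a' τ ^ (-(1 / (p - 1)))) (Set.Ioc 0 r))
    (hqint : ∀ r : ℝ, 0 < r → ENNReal.ofReal r < R → IntegrableOn q (Set.Ioc 0 r))
    (h : ℝ → ℝ → ℝ → ℝ)
    (hhmeas : ∀ lam₀ lam₁ : ℝ, Measurable fun τ => h τ lam₀ lam₁)
    (hhcont : ∀ τ : ℝ, Continuous fun z : ℝ × ℝ => h τ z.1 z.2)
    (θ : ℝ) (hθ0 : 0 < θ) (hθ1 : θ ≤ 1)
    (hq0 : ∀ᵐ τ ∂(volume.restrict {τ : ℝ | 0 < τ ∧ ENNReal.ofReal τ < R}), 0 ≤ q τ)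
    (hgrowth : ∀ᵐ τ ∂(volume.restrict {τ : ℝ | 0 < τ ∧ ENNReal.ofReal τ < R}),
      ∀ lam₀ lam₁ : ℝ, h τ lam₀ lam₁ * lam₁ ≤
        θ * q τ * |lam₀| ^ l * |lam₁| ^ (p - l) + (1 - θ) * dA n p a a' τ * |lam₁| ^ p)
    (hK : ∀ r : ℝ, 0 < r → ENNReal.ofReal r < R →
      BDK p l q (dA n p a a') 0 (Set.Ioc 0 r) < ⊤)
    (u u' v' w' : ℝ → ℝ)
    (huAC : ∀ r : ℝ, 0 < r → ENNReal.ofReal r < R → ACOn u u' 0 r)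
    (hvAC : ∀ r : ℝ, 0 < r → ENNReal.ofReal r < R →
      ACOn (fun τ => PhiP p (u' τ)) v' 0 r)
    (hwAC : ∀ r : ℝ, 0 < r → ENNReal.ofReal r < R →
      ACOn (fun τ => a τ * PhiP p (u' τ)) w' 0 r)
    (hu0 : u 0 = 0)
    (hODE : ∀ᵐ τ ∂(volume.restrict {τ : ℝ | 0 < τ ∧ ENNReal.ofReal τ < R}),
      w' τ + (n - 1) * (a τ / τ) * PhiP p (u' τ)
        - h τ (u τ) (u' τ) + φ (u τ) = 0)
    (hdeg : a 0 = 0 ∨ u' 0 = 0) :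
    ∀ τ : ℝ, 0 ≤ τ → ENNReal.ofReal τ < R → u τ = 0 := by
  -- restriction of a.e. statements to `(0, r]`
  have hsubR : ∀ r : ℝ, ENNReal.ofReal r < R →
      Ioc 0 r ⊆ {τ : ℝ | 0 < τ ∧ ENNReal.ofReal τ < R} := fun r hr x hx =>
    ⟨hx.1, (ENNReal.ofReal_le_ofReal hx.2).trans_lt hr⟩
  -- the key step
  have step : ∀ r s : ℝ, 0 < r → ENNReal.ofReal r < R → 0 ≤ s → s ≤ r →
      (∀ x ∈ Ico 0 s, u x = 0) →
      (∫⁻ t in Ioc s r,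
        ENNReal.ofReal (q t) ^ (p / l) * ENNReal.ofReal (dA n p a a' t) ^ (-((p - l) / l)) *
          (∫⁻ σ in Set.Ioc 0 t, ENNReal.ofReal (dA n p a a' σ) ^ (-(1 / (p - 1)))) ^ (p - 1) ≤ 1) →
      u r = 0 := by
    intro r s hr hrR hs hsr hus hB
    have hsub := hsubR r hrR
    have har : 0 ≤ a r := by
      have hc := ((haAC r hr hrR).abs hr).1.continuousOn
      rw [uIcc_of_le hr.le] at hc
      exact a_nonneg hr hc (ae_restrict_of_ae_restrict_of_subset hsub hapos)
    obtain ⟨hQ, hE, hen⟩ := energy (θ := θ) hp hl0 hlp hr hφcont (haAC r hr hrR) har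
      (hvint r hr hrR).1 (hqint r hr hrR)
      (ae_restrict_of_ae_restrict_of_subset hsub hgrowth) (huAC r hr hrR) (hvAC r hr hrR)
      (hwAC r hr hrR) hu0 (ae_restrict_of_ae_restrict_of_subset hsub hODE) hdeg
    have hH := hardy hp hl0 hlp hs hsr hr hqmeas (hvint r hr hrR).1
      (ae_restrict_of_ae_restrict_of_subset hsub hvpos)
      (ae_restrict_of_ae_restrict_of_subset hsub hq0) (huAC r hr hrR) hu0 hus hB hQ hE
    by_contra hne
    have hF := F_pos hφcont hφodd hφsign hne
    nlinarith
  intro T hT0 hTR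
  rcases hT0.eq_or_lt with rfl | hT
  · exact hu0
  -- a slightly larger endpoint
  have hT' : ∃ T' : ℝ, T < T' ∧ ENNReal.ofReal T' < R := by
    have hc : Filter.Tendsto ENNReal.ofReal (nhds T) (nhds (ENNReal.ofReal T)) :=
      ENNReal.continuous_ofReal.tendsto T
    have h1 := hc.eventually (gt_mem_nhds hTR)
    rw [Metric.eventually_nhds_iff] at h1
    obtain ⟨ε, hε, H⟩ := h1
    refine ⟨T + ε / 2, by linarith, H ?_⟩
    rw [Real.dist_eq, abs_lt]
    constructor <;> linarith
  obtain ⟨T', hTT', hT'R⟩ := hT'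
  have hT'0 : 0 < T' := hT.trans hTT'
  set S : Set ℝ := {t | ∀ x ∈ Ico 0 t, u x = 0} with hS
  have hScl : IsClosed S := by
    have : S = ⋂ x ∈ {x : ℝ | 0 ≤ x ∧ u x ≠ 0}, Iic x := by
      ext t
      simp only [hS, mem_setOf_eq, mem_iInter, mem_Iic, mem_Ico]
      constructor
      · intro h1 x hx
        by_contra h2
        exact hx.2 (h1 x ⟨hx.1, not_le.mp h2⟩)
      · intro h1 x hx
        by_contra h2
        exact absurd (h1 x ⟨hx.1, h2⟩) (not_le.mpr hx.2)
    rw [this]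
    exact isClosed_biInter fun x _ => isClosed_Iic
  set f : ℝ → ℝ≥0∞ := fun t => ENNReal.ofReal (q t) ^ (p / l) *
    ENNReal.ofReal (dA n p a a' t) ^ (-((p - l) / l)) *
      (∫⁻ σ in Set.Ioc 0 t, ENNReal.ofReal (dA n p a a' σ) ^ (-(1 / (p - 1)))) ^ (p - 1) with hf
  have hfin : ∫⁻ t in Ioc 0 T', f t ≠ ⊤ := by
    intro htop
    have hk := hK T' hT'0 hT'R
    have hlp' : 0 < l / p := div_pos hl0 (by linarith)
    have hc : 0 < ((p - l) / p) ^ ((p - l) / p) :=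
      Real.rpow_pos_of_pos (div_pos (by linarith) (by linarith)) _
    unfold BDK at hk
    rw [show (∫⁻ t in Ioc 0 T', ENNReal.ofReal (q t) ^ (p / l) *
      ENNReal.ofReal (dA n p a a' t) ^ (-((p - l) / l)) *
      (∫⁻ σ in Set.Ioc 0 t, ENNReal.ofReal (dA n p a a' σ) ^ (-(1 / (p - 1)))) ^ (p - 1)) = ⊤
      from htop, ENNReal.top_rpow_of_pos hlp', ENNReal.mul_top (by simpa using hc)] at hk
    exact lt_irrefl _ hk
  obtain ⟨δ, hδ, Hδ⟩ := exists_pos_setLIntegral_lt_of_measure_lt hfin one_ne_zero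
  have main : Icc 0 T' ⊆ S := by
    apply IsClosed.Icc_subset_of_forall_exists_gt (hScl.inter isClosed_Icc)
    · intro x hx
      exact absurd hx.2 (not_lt.mpr hx.1)
    · rintro s ⟨hsS, hs0, hsT⟩ y hy
      obtain ⟨d, hd0, hdδ⟩ : ∃ d : ℝ, 0 < d ∧ ENNReal.ofReal d < δ := by
        obtain ⟨e, he0, heδ⟩ := ENNReal.lt_iff_exists_nnreal_btwn.mp hδ
        refine ⟨e, by exact_mod_cast he0, by simpa using heδ⟩
      set t := min y (min T' (s + d)) with ht
      have hst : s < t := lt_min hy (lt_min hsT (by linarith))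
      have htT : t ≤ T' := (min_le_right _ _).trans (min_le_left _ _)
      have htd : t ≤ s + d := (min_le_right _ _).trans (min_le_right _ _)
      refine ⟨t, ?_, hst, min_le_left _ _⟩
      intro x hx
      by_cases hxs : x < s
      · exact hsS x ⟨hx.1, hxs⟩
      push Not at hxs
      rcases hx.1.eq_or_lt with h0 | h0
      · rw [← h0]; exact hu0
      have hxT : x ≤ T' := hx.2.le.trans htT
      refine step x s h0 ((ENNReal.ofReal_le_ofReal hxT).trans_lt hT'R) hs0 hxs hsS ?_
      have hsub : Ioc s x ⊆ Ioc 0 T' := Ioc_subset_Ioc hs0 hxT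
      have h3 := Hδ (Ioc s x) (by
        refine (Measure.restrict_apply_le _ _).trans_lt ?_
        rw [Real.volume_Ioc]
        refine (ENNReal.ofReal_le_ofReal ?_).trans_lt hdδ
        linarith [hx.2])
      rw [Measure.restrict_restrict measurableSet_Ioc, inter_eq_left.mpr hsub] at h3
      exact h3.le
  exact main ⟨hT'0.le, le_rfl⟩ T ⟨hT0, hTT'⟩
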